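/- Let b ≥ 3, let Λ ⊆ ℝ^b be a countable additive subgroup, and let W ⊆ ℝ^b be a positive three-dimensional subspace. Then the following are equivalent: (i) W^⊥ ∩ Λ = {0}; (ii) there exists w ∈ W with w^⊥ ∩ Λ = {0}; (iii) there exists a nonzero z ∈ ℂ^b with Re z, Im z ∈ W, q(z) = 0, and ⟨z, α⟩ ≠ 0 for every α ∈ Λ \ {0}. -/

import Mathlib

noncomputable section

open scoped BigOperators

def eps {b : ℕ} (i : Fin b) : ℝ := if (i : ℕ) < 3 then 1 else -1

def bR {b : ℕ} (v w : Fin b → ℝ) : ℝ := ∑ i, eps i * v i * w i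

def qR {b : ℕ} (v : Fin b → ℝ) : ℝ := bR v v

def bC {b : ℕ} (z w : Fin b → ℂ) : ℂ := ∑ i, (eps i : ℂ) * z i * w i

def qC {b : ℕ} (z : Fin b → ℂ) : ℂ := bC z z

def conjVec {b : ℕ} (z : Fin b → ℂ) : Fin b → ℂ := fun i => (starRingEnd ℂ) (z i)

def rePart {b : ℕ} (z : Fin b → ℂ) : Fin b → ℝ := fun i => (z i).re
def imPart {b : ℕ} (z : Fin b → ℂ) : Fin b → ℝ := fun i => (z i).im

def cplx {b : ℕ} (v : Fin b → ℝ) : Fin b → ℂ := fun i => (v i : ℂ)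

def isPeriodVec {b : ℕ} (z : Fin b → ℂ) : Prop :=
  qC z = 0 ∧ 0 < (bC z (conjVec z)).re

instance projectivizationTopology (K V : Type*) [DivisionRing K] [AddCommGroup V] [Module K V]
    [TopologicalSpace V] : TopologicalSpace (Projectivization K V) :=
  inferInstanceAs (TopologicalSpace (Quotient (projectivizationSetoid K V)))

def periodDomain (b : ℕ) : Set (Projectivization ℂ (Fin b → ℂ)) :=
  {x | ∃ (z : Fin b → ℂ) (hz : z ≠ 0), Projectivization.mk ℂ z hz = x ∧ isPeriodVec z}

def Pspan {b : ℕ} (z : Fin b → ℂ) : Submodule ℝ (Fin b → ℝ) :=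
  Submodule.span ℝ {rePart z, imPart z}

def PosDefOn {b : ℕ} (W : Submodule ℝ (Fin b → ℝ)) : Prop :=
  ∀ v ∈ W, v ≠ 0 → 0 < qR v

def twistorLine {b : ℕ} (W : Submodule ℝ (Fin b → ℝ)) :
    Set (Projectivization ℂ (Fin b → ℂ)) :=
  {x | ∃ (z : Fin b → ℂ) (hz : z ≠ 0), Projectivization.mk ℂ z hz = x ∧ isPeriodVec z ∧
    rePart z ∈ W ∧ imPart z ∈ W}

/-- `W^⊥ ∩ Λ = {0}`: the twistor line / three-space `W` is generic w.r.t. `Λ`. -/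
def IsGenericW {b : ℕ} (Λ : AddSubgroup (Fin b → ℝ)) (W : Submodule ℝ (Fin b → ℝ)) : Prop :=
  ∀ α ∈ Λ, (∀ w ∈ W, bR α w = 0) → α = 0

def bRlin {b : ℕ} (p : Fin b → ℝ) : (Fin b → ℝ) →ₗ[ℝ] ℝ where
  toFun v := bR v p
  map_add' x y := by
    unfold bR
    rw [← Finset.sum_add_distrib]
    exact Finset.sum_congr rfl fun i _ => by simp [Pi.add_apply]; ring
  map_smul' c x := by
    show bR (c • x) p = (RingHom.id ℝ) c • bR x p
    unfold bR
    rw [RingHom.id_apply, smul_eq_mul, Finset.mul_sum]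
    exact Finset.sum_congr rfl fun i _ => by simp [Pi.smul_apply]; ring

def perpSubmodule {b : ℕ} (P : Submodule ℝ (Fin b → ℝ)) : Submodule ℝ (Fin b → ℝ) :=
  ⨅ p ∈ P, LinearMap.ker (bRlin p)

theorem bR_comm' {b : ℕ} (v w : Fin b → ℝ) : bR v w = bR w v := by
  unfold bR
  exact Finset.sum_congr rfl fun i _ => by ring

theorem bR_add_right' {b : ℕ} (u v w : Fin b → ℝ) : bR u (v + w) = bR u v + bR u w := by
  rw [bR_comm', bR_comm' u v, bR_comm' u w]; exact (bRlin u).map_add v w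

theorem bR_smul_right' {b : ℕ} (c : ℝ) (u v : Fin b → ℝ) : bR u (c • v) = c * bR u v := by
  rw [bR_comm', bR_comm' u v]; exact (bRlin u).map_smul c v

theorem bR_add_left' {b : ℕ} (u v w : Fin b → ℝ) : bR (v + w) u = bR v u + bR w u :=
  (bRlin u).map_add v w

theorem bR_smul_left' {b : ℕ} (c : ℝ) (u v : Fin b → ℝ) : bR (c • v) u = c * bR v u :=
  (bRlin u).map_smul c v

def mkz {b : ℕ} (u v : Fin b → ℝ) : Fin b → ℂ := fun i => ⟨u i, v i⟩

theorem bC_re' {b : ℕ} (z w : Fin b → ℂ) :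
    (bC z w).re = bR (rePart z) (rePart w) - bR (imPart z) (imPart w) := by
  unfold bC bR rePart imPart
  rw [Complex.re_sum, ← Finset.sum_sub_distrib]
  exact Finset.sum_congr rfl fun i _ => by simp

theorem bC_im' {b : ℕ} (z w : Fin b → ℂ) :
    (bC z w).im = bR (rePart z) (imPart w) + bR (imPart z) (rePart w) := by
  unfold bC bR rePart imPart
  rw [Complex.im_sum, ← Finset.sum_add_distrib]
  exact Finset.sum_congr rfl fun i _ => by simp

theorem bC_cplx_zero {b : ℕ} (z : Fin b → ℂ) (α : Fin b → ℝ) :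
    bC z (cplx α) = 0 ↔ bR (rePart z) α = 0 ∧ bR (imPart z) α = 0 := by
  have h1 : rePart (cplx α) = α := by ext i; simp [rePart, cplx]
  have h2 : imPart (cplx α) = 0 := by ext i; simp [imPart, cplx]
  have h3 : ∀ v : Fin b → ℝ, bR v 0 = 0 := fun v => by simp [bR]
  rw [Complex.ext_iff, bC_re', bC_im', h1, h2, h3, h3]
  simp

theorem quad_countable (x y w : ℝ) (h : ¬ (x = 0 ∧ y = 0 ∧ w = 0)) :
    {t : ℝ | x + y * t + w * t ^ 2 = 0}.Countable := by
  open Polynomial in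
  have hp : (C x + C y * X + C w * X ^ 2 : ℝ[X]) ≠ 0 := by
    intro h0
    apply h
    refine ⟨?_, ?_, ?_⟩
    · simpa [coeff_X] using congrArg (fun p => coeff p 0) h0
    · simpa [coeff_X, coeff_C] using congrArg (fun p => coeff p 1) h0
    · simpa [coeff_X, coeff_C] using congrArg (fun p => coeff p 2) h0
  refine ((Polynomial.finite_setOf_isRoot hp).subset ?_).countable
  intro t ht
  simpa [Polynomial.IsRoot] using ht

theorem exists_good {b : ℕ} (Λ : Set (Fin b → ℝ)) (hΛ : Λ.Countable)
    (B : (Fin b → ℝ) → Set ℝ) (h : ∀ α ∈ Λ, (B α).Countable) :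
    ∃ t : ℝ, ∀ α ∈ Λ, t ∉ B α := by
  have hc : (⋃ α ∈ Λ, B α).Countable := hΛ.biUnion h
  obtain ⟨t, ht⟩ := (hc.dense_compl ℝ).nonempty
  refine ⟨t, fun α hα hB => ht ?_⟩
  exact Set.mem_biUnion hα hB

def bRW {b : ℕ} (W : Submodule ℝ (Fin b → ℝ)) : LinearMap.BilinForm ℝ W :=
  LinearMap.mk₂ ℝ (fun v w => bR (v : Fin b → ℝ) (w : Fin b → ℝ))
    (fun _ _ _ => bR_add_left' _ _ _) (fun _ _ _ => bR_smul_left' _ _ _)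
    (fun _ _ _ => bR_add_right' _ _ _) (fun _ _ _ => bR_smul_right' _ _ _)

theorem exists_onb {b : ℕ} (W : Submodule ℝ (Fin b → ℝ)) (hdim : Module.finrank ℝ ↥W = 3)
    (hpos : PosDefOn W) : ∃ e f g : Fin b → ℝ, e ∈ W ∧ f ∈ W ∧ g ∈ W ∧
      bR e e = 1 ∧ bR f f = 1 ∧ bR g g = 1 ∧ bR e f = 0 ∧ bR e g = 0 ∧ bR f g = 0 ∧
      ∀ α, bR e α = 0 → bR f α = 0 → bR g α = 0 → ∀ w ∈ W, bR α w = 0 := by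
  have hs : LinearMap.IsSymm (bRW W) := ⟨fun x y => bR_comm' _ _⟩
  obtain ⟨v, hv⟩ := LinearMap.BilinForm.exists_orthogonal_basis (B := bRW W) hs
  generalize Module.finrank ℝ ↥W = n at v hv hdim
  subst hdim
  have ho : ∀ i j, i ≠ j → bR (v i : Fin b → ℝ) (v j) = 0 := fun i j hij => hv hij
  have hq : ∀ i, 0 < bR (v i : Fin b → ℝ) (v i) := fun i =>
    hpos _ (v i).2 (by simpa using v.ne_zero i)
  have hn : ∀ i, bR ((√(bR (v i : Fin b → ℝ) (v i)))⁻¹ • (v i : Fin b → ℝ))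
      ((√(bR (v i : Fin b → ℝ) (v i)))⁻¹ • (v i : Fin b → ℝ)) = 1 := by
    intro i
    have h1 := Real.mul_self_sqrt (hq i).le
    have h2 := Real.sqrt_pos.mpr (hq i)
    rw [bR_smul_left', bR_smul_right']
    generalize √(bR (v i : Fin b → ℝ) (v i)) = s at *
    rw [← h1]
    field_simp
  have hz : ∀ i α, bR ((√(bR (v i : Fin b → ℝ) (v i)))⁻¹ • (v i : Fin b → ℝ)) α = 0 →
      bR (v i : Fin b → ℝ) α = 0 := by
    intro i α h
    rw [bR_smul_left'] at h
    exact (mul_eq_zero.mp h).resolve_left (inv_ne_zero (Real.sqrt_pos.mpr (hq i)).ne')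
  refine ⟨_, _, _, W.smul_mem _ (v 0).2, W.smul_mem _ (v 1).2, W.smul_mem _ (v 2).2,
    hn 0, hn 1, hn 2, ?_, ?_, ?_, ?_⟩
  · rw [bR_smul_left', bR_smul_right', ho 0 1 (by decide)]; simp
  · rw [bR_smul_left', bR_smul_right', ho 0 2 (by decide)]; simp
  · rw [bR_smul_left', bR_smul_right', ho 1 2 (by decide)]; simp
  · intro α h0 h1 h2 w hw
    have hw' := v.sum_repr ⟨w, hw⟩
    rw [Fin.sum_univ_three] at hw'
    have hw2 := congrArg (Subtype.val) hw'
    simp only [Submodule.coe_add, Submodule.coe_smul] at hw2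
    rw [bR_comm', ← hw2]
    simp only [bR_add_left', bR_smul_left', hz 0 α h0, hz 1 α h1, hz 2 α h2]
    simp

/-- equivalent characterizations of genericity of a positive three-space. -/
theorem stmt7 (b : ℕ) (hb : 3 ≤ b) (Λ : AddSubgroup (Fin b → ℝ))
    (hΛ : (Λ : Set (Fin b → ℝ)).Countable)
    (W : Submodule ℝ (Fin b → ℝ)) (hdim : Module.finrank ℝ ↥W = 3) (hpos : PosDefOn W) :
    (IsGenericW Λ W ↔ ∃ w ∈ W, ∀ α ∈ Λ, bR w α = 0 → α = 0) ∧
    (IsGenericW Λ W ↔ ∃ z : Fin b → ℂ, z ≠ 0 ∧ rePart z ∈ W ∧ imPart z ∈ W ∧ qC z = 0 ∧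
      ∀ α ∈ Λ, α ≠ 0 → bC z (cplx α) ≠ 0) := by
  have hback2 : (∃ w ∈ W, ∀ α ∈ Λ, bR w α = 0 → α = 0) → IsGenericW Λ W := by
    rintro ⟨w, hw, h⟩ α hα h0
    exact h α hα (by rw [bR_comm']; exact h0 w hw)
  obtain ⟨e, f, g, he, hf, hg, hee, hff, hgg, hef, heg, hfg, hspan⟩ := exists_onb W hdim hpos
  have hΛ' : ((Λ : Set (Fin b → ℝ)) \ {0}).Countable := hΛ.mono Set.diff_subset
  refine ⟨⟨fun hgen => ?_, hback2⟩, ⟨fun hgen => ?_, ?_⟩⟩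
  · obtain ⟨t, ht⟩ := exists_good _ hΛ'
      (fun α => {t : ℝ | bR e α + bR f α * t + bR g α * t ^ 2 = 0}) (by
        rintro α ⟨hα, hα0⟩
        apply quad_countable
        rintro ⟨h1, h2, h3⟩
        exact hα0 (hgen α hα (hspan α h1 h2 h3)))
    refine ⟨e + t • f + t ^ 2 • g, W.add_mem (W.add_mem he (W.smul_mem _ hf)) (W.smul_mem _ hg),
      fun α hα h0 => ?_⟩
    by_contra hne
    refine ht α ⟨hα, hne⟩ ?_
    simp only [bR_add_left', bR_smul_left'] at h0
    simp only [Set.mem_setOf_eq]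
    linarith
  · obtain ⟨t, ht⟩ := exists_good _ hΛ'
      (fun α => {t : ℝ | bR g α = 0 ∧ bR e α + (2 * bR f α) * t + (- bR e α) * t ^ 2 = 0}) (by
        rintro α ⟨hα, hα0⟩
        by_cases h3 : bR g α = 0
        · refine (quad_countable (bR e α) (2 * bR f α) (- bR e α) ?_).mono fun t ht => ht.2
          rintro ⟨h1, h2, -⟩
          exact hα0 (hgen α hα (hspan α h1 (by linarith) h3))
        · simp [h3])
    have hr : rePart (mkz ((1 - t ^ 2) • e + (2 * t) • f) ((1 + t ^ 2) • g))
      = (1 - t ^ 2) • e + (2 * t) • f := rfl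
    have hi : imPart (mkz ((1 - t ^ 2) • e + (2 * t) • f) ((1 + t ^ 2) • g))
      = (1 + t ^ 2) • g := rfl
    have hp : (0 : ℝ) < 1 + t ^ 2 := by positivity
    refine ⟨mkz ((1 - t ^ 2) • e + (2 * t) • f) ((1 + t ^ 2) • g), ?_, ?_, ?_, ?_, ?_⟩
    · intro h0
      rw [h0] at hi
      have h1 : bR ((1 + t ^ 2) • g) g = 0 := by rw [← hi]; simp [bR, imPart]
      rw [bR_smul_left', hgg] at h1
      linarith
    · rw [hr]; exact W.add_mem (W.smul_mem _ he) (W.smul_mem _ hf)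
    · rw [hi]; exact W.smul_mem _ hg
    · unfold qC
      rw [Complex.ext_iff, bC_re', bC_im', hr, hi]
      simp only [bR_add_left', bR_smul_left', bR_add_right', bR_smul_right', hee, hff, hgg, hef,
        heg, hfg, bR_comm' f e, bR_comm' g e, bR_comm' g f, Complex.zero_re, Complex.zero_im]
      constructor <;> ring
    · intro α hα hne h0
      rw [bC_cplx_zero, hr, hi] at h0
      simp only [bR_add_left', bR_smul_left'] at h0
      refine ht α ⟨hα, hne⟩ ⟨?_, ?_⟩
      · exact (mul_eq_zero.mp h0.2).resolve_left hp.ne'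
      · linarith [h0.1]
  · rintro ⟨z, -, hr, hi, -, h⟩ α hα h0
    by_contra hne
    refine h α hα hne ((bC_cplx_zero z α).mpr ⟨?_, ?_⟩)
    · rw [bR_comm']; exact h0 _ hr
    · rw [bR_comm']; exact h0 _ hi
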